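/- There is a universal constant C ∈ (0,∞) such that for every p ∈ [1,∞), every t ∈ (0,∞), every Banach space (X,‖·‖_X), and every smooth compactly supported f : ℍ(ℝ) → X, ‖Q_t * f − Q_{2t} * f‖_{L_p(ℍ(ℝ),X)} ≤ C √t · ‖Q_t * ∇_ℍ f‖_{L_p(ℍ(ℝ),ℓ_p²(X))}. -/

import Mathlib

open MeasureTheory

/-- The real Heisenberg group `ℍ(ℝ)`, identified with `ℝ³`; the Lebesgue measure
(`volume`) is a Haar measure for the Heisenberg group structure. -/
abbrev HR : Type := ℝ × ℝ × ℝ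

namespace HR

/-- Right translation by the central element `c^t`: `h ↦ h·c^t`. -/
def vmul (t : ℝ) (h : HR) : HR := (h.1, h.2.1, h.2.2 + t)

/-- The Poisson kernel `P_t(u) = t/(π(t²+u²))` on `ℝ`. -/
noncomputable def Pker (t u : ℝ) : ℝ := t / (Real.pi * (t ^ 2 + u ^ 2))

/-- `Q_t(u) = ∂P_t/∂t(u) = (u²−t²)/(π(t²+u²)²)`. -/
noncomputable def Qker (t u : ℝ) : ℝ := (u ^ 2 - t ^ 2) / (Real.pi * (t ^ 2 + u ^ 2) ^ 2)

variable {X : Type*} [NormedAddCommGroup X] [NormedSpace ℝ X]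

/-- Convolution of a kernel `ψ : ℝ → ℝ` with `g : ℍ(ℝ) → X` along the center:
`(ψ*g)(x,y,z) = ∫_ℝ ψ(u) g(x,y,z−u) du`. -/
noncomputable def conv (ψ : ℝ → ℝ) (g : HR → X) (h : HR) : X :=
  ∫ u : ℝ, ψ u • g (h.1, h.2.1, h.2.2 - u)

/-- The left-invariant horizontal derivative `∂_a f = ∂f/∂x`. -/
noncomputable def da (f : HR → X) (h : HR) : X := fderiv ℝ f h (1, 0, 0)

/-- The left-invariant horizontal derivative `∂_b f = ∂f/∂y + x·∂f/∂z`. -/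
noncomputable def db (f : HR → X) (h : HR) : X :=
  fderiv ℝ f h (0, 1, 0) + h.1 • fderiv ℝ f h (0, 0, 1)

end HR

/-!
Put `F = Q_t * f`. The Poisson semigroup law `P_s * P_t = P_{s+t}`, differentiated in `t`, gives
`Q_{2t} * f = P_t * F`, so `Q_{2t} * f - Q_t * f` is the average against `P_t(u) du` of the
increments of `F` along central translations of size `u`. Such a translation is a commutator of two
horizontal translations of size `√|u|`, each of which moves `F` in `L_p` by at most `√|u|` times the
norm of the corresponding horizontal derivative `Q_t * ∂_a f` or `Q_t * ∂_b f`. Minkowski's integral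
inequality then leaves the half moment `∫ P_t(u) √|u| du`, which scales like `√t`.
-/

open Filter Function Topology
open scoped Convolution ENNReal FourierTransform

section Minkowski

variable {S H : Type*} [MeasurableSpace S] [MeasurableSpace H] {ν : Measure S} {μ : Measure H}

lemma rpow_lintegral_mul_le {p : ℝ} (hp : 1 ≤ p) {w g : S → ℝ≥0∞} (hw : Measurable w)
    (hg : Measurable g) :
    (∫⁻ s, w s * g s ∂ν) ^ p ≤ (∫⁻ s, w s ∂ν) ^ (p - 1) * ∫⁻ s, w s * g s ^ p ∂ν := by
  have hp₀ : 0 < p := zero_lt_one.trans_le hp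
  have hpow := eLpNorm_le_eLpNorm_mul_rpow_measure_univ (μ := ν.withDensity w) (p := 1)
    (q := ENNReal.ofReal p) (by simpa using hp) hg.aestronglyMeasurable
  rw [eLpNorm_one_eq_lintegral_enorm, eLpNorm_eq_lintegral_rpow_enorm_toReal
    (by simpa using hp₀) ENNReal.ofReal_ne_top, ENNReal.toReal_ofReal hp₀.le] at hpow
  simp only [enorm_eq_self, ENNReal.toReal_one, div_one] at hpow
  rw [lintegral_withDensity_eq_lintegral_mul _ hw hg,
    lintegral_withDensity_eq_lintegral_mul _ hw (hg.pow_const p),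
    withDensity_apply _ MeasurableSet.univ, setLIntegral_univ] at hpow
  refine (ENNReal.rpow_le_rpow hpow hp₀.le).trans_eq ?_
  rw [ENNReal.mul_rpow_of_nonneg _ _ hp₀.le, ← ENNReal.rpow_mul, ← ENNReal.rpow_mul,
    one_div_mul_cancel hp₀.ne', ENNReal.rpow_one, sub_mul, one_div_mul_cancel hp₀.ne', one_mul,
    mul_comm]
  rfl

variable [SFinite ν] [SFinite μ]

lemma lintegral_rpow_lintegral_mul_le {p : ℝ} (hp : 1 ≤ p) {w : S → ℝ≥0∞} (hw : Measurable w)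
    {G : S → H → ℝ≥0∞} (hG : Measurable (uncurry G)) (hG₁ : ∀ s, ∫⁻ h, G s h ^ p ∂μ ≤ 1) :
    ∫⁻ h, (∫⁻ s, w s * G s h ∂ν) ^ p ∂μ ≤ (∫⁻ s, w s ∂ν) ^ p := by
  have hGp : Measurable (uncurry fun h s => w s * G s h ^ p) :=
    (hw.comp measurable_snd).mul ((hG.comp measurable_swap).pow_const p)
  calc ∫⁻ h, (∫⁻ s, w s * G s h ∂ν) ^ p ∂μ
      ≤ ∫⁻ h, (∫⁻ s, w s ∂ν) ^ (p - 1) * ∫⁻ s, w s * G s h ^ p ∂ν ∂μ :=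
        lintegral_mono fun h => rpow_lintegral_mul_le hp hw (hG.comp measurable_prodMk_right)
    _ = (∫⁻ s, w s ∂ν) ^ (p - 1) * ∫⁻ s, w s * ∫⁻ h, G s h ^ p ∂μ ∂ν := by
        rw [lintegral_const_mul _ hGp.lintegral_prod_right,
          lintegral_lintegral_swap hGp.aemeasurable]
        congr 1
        exact lintegral_congr fun s =>
          lintegral_const_mul _ ((hG.comp measurable_prodMk_left).pow_const p)
    _ ≤ (∫⁻ s, w s ∂ν) ^ (p - 1) * ∫⁻ s, w s ∂ν := by
        gcongr with s
        exact mul_le_of_le_one_right' (hG₁ s)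
    _ = (∫⁻ s, w s ∂ν) ^ p := by
        nth_rw 2 [← ENNReal.rpow_one (∫⁻ s, w s ∂ν)]
        rw [← ENNReal.rpow_add_of_nonneg _ _ (by linarith) zero_le_one, sub_add_cancel]

theorem lintegral_rpow_lintegral_le {p : ℝ} (hp : 1 ≤ p) {G : S → H → ℝ≥0∞}
    (hG : Measurable (uncurry G)) :
    (∫⁻ h, (∫⁻ s, G s h ∂ν) ^ p ∂μ) ^ (1 / p) ≤ ∫⁻ s, (∫⁻ h, G s h ^ p ∂μ) ^ (1 / p) ∂ν := by
  have hp₀ : 0 < p := zero_lt_one.trans_le hp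
  -- Dividing `G s` by its `L_p` norm `N s` reduces to the Jensen inequality for weight `N`.
  set N : S → ℝ≥0∞ := fun s => (∫⁻ h, G s h ^ p ∂μ) ^ (1 / p) with hN_def
  have hN : Measurable N := ((hG.pow_const p).lintegral_prod_right').pow_const _
  have hNp (s : S) : N s ^ p = ∫⁻ h, G s h ^ p ∂μ := by
    rw [hN_def, ← ENNReal.rpow_mul, one_div_mul_cancel hp₀.ne', ENNReal.rpow_one]
  have hGp (s : S) : Measurable fun h => G s h ^ p :=
    (hG.comp measurable_prodMk_left).pow_const p
  rcases eq_or_ne (∫⁻ s, N s ∂ν) ∞ with hW | hW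
  · exact hW ▸ le_top
  have hNG : Measurable (uncurry fun s h => (N s)⁻¹ * G s h) :=
    (hN.inv.comp measurable_fst).mul hG
  have hfactor : ∀ᵐ s ∂ν, ∀ᵐ h ∂μ, G s h = N s * ((N s)⁻¹ * G s h) := by
    filter_upwards [ae_lt_top hN hW] with s hs
    rcases eq_or_ne (N s) 0 with h₀ | h₀
    · have hG₀ := hNp s
      rw [h₀, ENNReal.zero_rpow_of_pos hp₀, eq_comm, lintegral_eq_zero_iff (hGp s)] at hG₀
      filter_upwards [hG₀] with h hh
      simp [(ENNReal.rpow_eq_zero_iff_of_pos hp₀).1 hh]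
    · exact .of_forall fun h => by
        rw [← mul_assoc, ENNReal.mul_inv_cancel h₀ hs.ne, one_mul]
  have hfactor' : ∀ᵐ h ∂μ, ∀ᵐ s ∂ν, G s h = N s * ((N s)⁻¹ * G s h) :=
    (Measure.ae_ae_comm (p := fun s h => G s h = N s * ((N s)⁻¹ * G s h))
      (measurableSet_eq_fun hG ((hN.comp measurable_fst).mul hNG))).1 hfactor
  have hnormalized (s : S) : ∫⁻ h, ((N s)⁻¹ * G s h) ^ p ∂μ ≤ 1 := by
    simp only [ENNReal.mul_rpow_of_nonneg _ _ hp₀.le]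
    rw [lintegral_const_mul _ (hGp s), ← hNp, ENNReal.inv_rpow]
    exact ENNReal.inv_mul_le_one _
  rw [one_div, ENNReal.rpow_inv_le_iff hp₀]
  refine le_trans (lintegral_mono_ae ?_)
    (lintegral_rpow_lintegral_mul_le (μ := μ) hp hN hNG hnormalized)
  filter_upwards [hfactor'] with h hh
  rw [lintegral_congr_ae hh]

theorem eLpNorm_integral_le {X : Type*} [NormedAddCommGroup X] [NormedSpace ℝ X] {p : ℝ≥0∞}
    (hp : 1 ≤ p) (hp_top : p ≠ ∞) {f : S → H → X} (hf : StronglyMeasurable (uncurry f)) :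
    eLpNorm (fun h => ∫ s, f s h ∂ν) p μ ≤ ∫⁻ s, eLpNorm (f s) p μ ∂ν := by
  have hp₀ : p ≠ 0 := (zero_lt_one.trans_le hp).ne'
  simp only [eLpNorm_eq_lintegral_rpow_enorm_toReal hp₀ hp_top]
  refine le_trans ?_ (lintegral_rpow_lintegral_le
    (by simpa using ENNReal.toReal_mono hp_top hp) hf.enorm)
  gcongr with h
  exact enorm_integral_le_lintegral_enorm _

end Minkowski

section Increments

variable {H X : Type*} [MeasurableSpace H] {μ : Measure H} [NormedAddCommGroup X] {p : ℝ≥0∞}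
  {F : H → X}

lemma eLpNorm_comp_sub_le_of_commutator {A B V : H → H} (hA : MeasurePreserving A μ μ)
    (hB : MeasurePreserving B μ μ) (hV : MeasurePreserving V μ μ)
    (hcomm : ∀ h, A (B (V h)) = B (A h)) (hF : AEStronglyMeasurable F μ) (hp : 1 ≤ p) :
    eLpNorm (F ∘ V - F) p μ ≤ 2 * (eLpNorm (F ∘ A - F) p μ + eLpNorm (F ∘ B - F) p μ) := by
  set α := F ∘ A - F
  set β := F ∘ B - F
  have hα : AEStronglyMeasurable α μ := (hF.comp_measurePreserving hA).sub hF
  have hβ : AEStronglyMeasurable β μ := (hF.comp_measurePreserving hB).sub hF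
  have hαBV := hα.comp_measurePreserving (hB.comp hV)
  have hβV := hβ.comp_measurePreserving hV
  have hβA := hβ.comp_measurePreserving hA
  have hdecomp : F ∘ V - F = (α + β ∘ A) - (α ∘ (B ∘ V) + β ∘ V) := by
    funext h
    simp only [α, β, Pi.add_apply, Pi.sub_apply, Function.comp_apply, hcomm]
    abel
  calc eLpNorm (F ∘ V - F) p μ
      ≤ (eLpNorm α p μ + eLpNorm (β ∘ A) p μ)
        + (eLpNorm (α ∘ (B ∘ V)) p μ + eLpNorm (β ∘ V) p μ) := by
        rw [hdecomp]
        exact (eLpNorm_sub_le (hα.add hβA) (hαBV.add hβV) hp).trans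
          (add_le_add (eLpNorm_add_le hα hβA hp) (eLpNorm_add_le hαBV hβV hp))
    _ = 2 * (eLpNorm α p μ + eLpNorm β p μ) := by
        rw [eLpNorm_comp_measurePreserving hβ hA, eLpNorm_comp_measurePreserving hβ hV,
          eLpNorm_comp_measurePreserving hα (hB.comp hV), two_mul]

lemma eLpNorm_comp_flow_sub_le [NormedSpace ℝ X] [CompleteSpace X] [TopologicalSpace H]
    [SecondCountableTopology H] [OpensMeasurableSpace H] [SFinite μ] (hp : 1 ≤ p) (hp_top : p ≠ ∞)
    {T : ℝ → H → H} (hT : Continuous (uncurry T)) (hT₀ : T 0 = id)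
    (hTμ : ∀ σ, MeasurePreserving (T σ) μ μ) {F' : H → X} (hF' : Continuous F')
    (hderiv : ∀ h σ, HasDerivAt (fun σ => F (T σ h)) (F' (T σ h)) σ) (s : ℝ) :
    eLpNorm (F ∘ T s - F) p μ ≤ ‖s‖ₑ * eLpNorm F' p μ := by
  have hF'T : Continuous (uncurry fun σ h => F' (T σ h)) := hF'.comp hT
  have hftc (h : H) : F (T s h) - F h = ∫ σ in 0..s, F' (T σ h) := by
    rw [intervalIntegral.integral_eq_sub_of_hasDerivAt (fun σ _ => hderiv h σ)
      ((hF'T.comp (Continuous.prodMk_left h)).intervalIntegrable 0 s), hT₀, id]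
  calc eLpNorm (F ∘ T s - F) p μ
      = eLpNorm (fun h => ∫ σ in Set.uIoc 0 s, F' (T σ h)) p μ :=
        eLpNorm_congr_norm_ae (.of_forall fun h => by
          rw [Pi.sub_apply, comp_apply, hftc, intervalIntegral.norm_intervalIntegral_eq])
    _ ≤ ∫⁻ σ in Set.uIoc 0 s, eLpNorm (F' ∘ T σ) p μ :=
        eLpNorm_integral_le hp hp_top hF'T.stronglyMeasurable
    _ = ‖s‖ₑ * eLpNorm F' p μ := by
        simp only [eLpNorm_comp_measurePreserving hF'.aestronglyMeasurable (hTμ _)]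
        rw [setLIntegral_const, Real.volume_uIoc, sub_zero, mul_comm, ← Real.enorm_eq_ofReal_abs]

end Increments

section TwoSidedExponential

variable {z : ℂ} {c : ℝ}

lemma eqOn_exp_mul_sub_mul_abs_Iic : Set.EqOn (fun v : ℝ => Complex.exp ((z + c) * v))
    (fun v : ℝ => Complex.exp (z * v - c * |v|)) (Set.Iic 0) := fun v hv => by
  simp only [abs_of_nonpos (Set.mem_Iic.1 hv), Complex.ofReal_neg]
  ring_nf

lemma eqOn_exp_mul_sub_mul_abs_Ioi : Set.EqOn (fun v : ℝ => Complex.exp ((z - c) * v))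
    (fun v : ℝ => Complex.exp (z * v - c * |v|)) (Set.Ioi 0) := fun v hv => by
  simp only [abs_of_pos (Set.mem_Ioi.1 hv)]
  ring_nf

lemma integrableOn_exp_mul_sub_mul_abs_Iic (hz : |z.re| < c) :
    IntegrableOn (fun v : ℝ => Complex.exp (z * v - c * |v|)) (Set.Iic 0) :=
  (integrableOn_exp_mul_complex_Iic (by simpa [neg_lt_iff_pos_add] using (abs_lt.1 hz).1)
    0).congr_fun eqOn_exp_mul_sub_mul_abs_Iic measurableSet_Iic

lemma integrableOn_exp_mul_sub_mul_abs_Ioi (hz : |z.re| < c) :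
    IntegrableOn (fun v : ℝ => Complex.exp (z * v - c * |v|)) (Set.Ioi 0) :=
  (integrableOn_exp_mul_complex_Ioi (by simpa using (abs_lt.1 hz).2) 0).congr_fun
    eqOn_exp_mul_sub_mul_abs_Ioi measurableSet_Ioi

lemma integrable_exp_mul_sub_mul_abs (hz : |z.re| < c) :
    Integrable fun v : ℝ => Complex.exp (z * v - c * |v|) := by
  rw [← integrableOn_univ, ← Set.Iic_union_Ioi (a := (0 : ℝ))]
  exact (integrableOn_exp_mul_sub_mul_abs_Iic hz).union (integrableOn_exp_mul_sub_mul_abs_Ioi hz)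

lemma integral_exp_mul_sub_mul_abs (hz : |z.re| < c) :
    ∫ v : ℝ, Complex.exp (z * v - c * |v|) = 1 / (z + c) - 1 / (z - c) := by
  rw [← intervalIntegral.integral_Iic_add_Ioi (integrableOn_exp_mul_sub_mul_abs_Iic hz)
      (integrableOn_exp_mul_sub_mul_abs_Ioi hz),
    ← setIntegral_congr_fun measurableSet_Iic eqOn_exp_mul_sub_mul_abs_Iic,
    ← setIntegral_congr_fun measurableSet_Ioi eqOn_exp_mul_sub_mul_abs_Ioi,
    integral_exp_mul_complex_Iic (by simpa [neg_lt_iff_pos_add] using (abs_lt.1 hz).1),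
    integral_exp_mul_complex_Ioi (by simpa using (abs_lt.1 hz).2)]
  simp [neg_div, sub_eq_add_neg]

end TwoSidedExponential

namespace HR

section PoissonKernel

variable {t : ℝ}

lemma Pker_nonneg (ht : 0 < t) (u : ℝ) : 0 ≤ Pker t u := by
  unfold Pker
  positivity

lemma continuous_Pker (ht : 0 < t) : Continuous (Pker t) := by
  unfold Pker
  exact continuous_const.div (by fun_prop) fun u => by positivity

lemma continuous_Qker (ht : 0 < t) : Continuous (Qker t) := by
  unfold Qker
  exact Continuous.div (by fun_prop) (by fun_prop) fun u => by positivity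

lemma Pker_eq_cauchyPDFReal (ht : 0 < t) :
    Pker t = ProbabilityTheory.cauchyPDFReal 0 t.toNNReal := by
  funext u
  rw [ProbabilityTheory.cauchyPDFReal_def, Pker, Real.coe_toNNReal t ht.le, sub_zero,
    add_comm (u ^ 2)]
  field_simp

lemma integrable_Pker (ht : 0 < t) : Integrable (Pker t) := by
  rw [Pker_eq_cauchyPDFReal ht]
  exact ProbabilityTheory.integrable_cauchyPDFReal 0

lemma integral_Pker (ht : 0 < t) : ∫ u, Pker t u = 1 := by
  rw [Pker_eq_cauchyPDFReal ht]
  exact ProbabilityTheory.integral_cauchyPDFReal_eq_one 0 (Real.toNNReal_pos.2 ht).ne'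

lemma integrable_ofReal_Pker (ht : 0 < t) : Integrable fun u => (Pker t u : ℂ) :=
  (integrable_Pker ht).ofReal

lemma Pker_le (ht : 0 < t) (u : ℝ) : Pker t u ≤ (Real.pi * t)⁻¹ := by
  calc Pker t u ≤ t / (Real.pi * t ^ 2) := by
        unfold Pker
        gcongr
        exact le_add_of_nonneg_right (sq_nonneg u)
    _ = (Real.pi * t)⁻¹ := by field_simp

lemma norm_Pker_le (ht : 0 < t) (u : ℝ) : ‖Pker t u‖ ≤ (Real.pi * t)⁻¹ := by
  rw [Real.norm_of_nonneg (Pker_nonneg ht u)]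
  exact Pker_le ht u

lemma abs_Qker_le (ht : 0 < t) (u : ℝ) : |Qker t u| ≤ t⁻¹ * Pker t u := by
  have hnum : |u ^ 2 - t ^ 2| ≤ t ^ 2 + u ^ 2 :=
    abs_le.2 ⟨by linarith [sq_nonneg u], by linarith [sq_nonneg t]⟩
  calc |Qker t u| = |u ^ 2 - t ^ 2| / (Real.pi * (t ^ 2 + u ^ 2) ^ 2) := by
        rw [Qker, abs_div, abs_of_nonneg (a := Real.pi * _) (by positivity)]
    _ ≤ (t ^ 2 + u ^ 2) / (Real.pi * (t ^ 2 + u ^ 2) ^ 2) := by gcongr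
    _ = t⁻¹ * Pker t u := by
        unfold Pker
        field_simp

lemma norm_Qker_le (ht : 0 < t) (u : ℝ) : ‖Qker t u‖ ≤ (Real.pi * t ^ 2)⁻¹ :=
  calc ‖Qker t u‖ ≤ t⁻¹ * Pker t u := abs_Qker_le ht u
    _ ≤ t⁻¹ * (Real.pi * t)⁻¹ := by
        gcongr
        exact Pker_le ht u
    _ = (Real.pi * t ^ 2)⁻¹ := by field_simp

lemma integrable_Qker (ht : 0 < t) : Integrable (Qker t) :=
  ((integrable_Pker ht).const_mul t⁻¹).mono' (continuous_Qker ht).aestronglyMeasurable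
    (.of_forall (abs_Qker_le ht))

lemma hasDerivAt_Pker (ht : 0 < t) (u : ℝ) : HasDerivAt (fun s => Pker s u) (Qker t u) t := by
  have hden : HasDerivAt (fun s => Real.pi * (s ^ 2 + u ^ 2)) (Real.pi * (2 * t)) t := by
    simpa using ((hasDerivAt_pow 2 t).add_const (u ^ 2)).const_mul Real.pi
  refine ((hasDerivAt_id' t).div hden (by positivity)).congr_deriv ?_
  unfold Qker
  field_simp
  ring

lemma integrable_exp_neg_two_pi_mul_abs (ht : 0 < t) :
    Integrable fun v : ℝ => Complex.exp (-(2 * Real.pi * t * |v|)) := by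
  have h := integrable_exp_mul_sub_mul_abs (z := 0) (c := 2 * Real.pi * t)
    (by simp only [Complex.zero_re, abs_zero]; positivity)
  simpa using h

lemma inv_add_sub_inv_sub_eq_Pker (ht : 0 < t) (u : ℝ) :
    1 / (2 * Real.pi * u * Complex.I + ↑(2 * Real.pi * t))
      - 1 / (2 * Real.pi * u * Complex.I - ↑(2 * Real.pi * t)) = (Pker t u : ℂ) := by
  have hpi : (Real.pi : ℂ) ≠ 0 := Complex.ofReal_ne_zero.2 Real.pi_ne_zero
  have hden : (t : ℂ) ^ 2 + (u : ℂ) ^ 2 ≠ 0 := by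
    norm_cast
    positivity
  have hprod : (2 * Real.pi * u * Complex.I + ↑(2 * Real.pi * t)) *
      (2 * Real.pi * u * Complex.I - ↑(2 * Real.pi * t)) =
        -(2 * Real.pi) ^ 2 * (t ^ 2 + u ^ 2) := by
    push_cast
    linear_combination (2 * Real.pi * u : ℂ) ^ 2 * Complex.I_sq
  have hfactors := mul_ne_zero_iff.1 (hprod ▸ mul_ne_zero (by simp [hpi]) hden)
  rw [div_sub_div _ _ hfactors.1 hfactors.2, hprod]
  unfold Pker
  push_cast
  field_simp
  ring

lemma fourierInv_exp_neg_two_pi_mul_abs (ht : 0 < t) :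
    𝓕⁻ (fun v : ℝ => Complex.exp (-(2 * Real.pi * t * |v|))) = fun u => (Pker t u : ℂ) := by
  funext u
  have hre : |(2 * Real.pi * u * Complex.I : ℂ).re| < 2 * Real.pi * t := by
    rw [show (2 * Real.pi * u * Complex.I : ℂ).re = 0 by simp, abs_zero]
    positivity
  rw [← inv_add_sub_inv_sub_eq_Pker ht, ← integral_exp_mul_sub_mul_abs hre, Real.fourierInv_eq']
  refine integral_congr_ae (.of_forall fun v => ?_)
  simp only [smul_eq_mul, ← Complex.exp_add, Real.inner_apply]
  push_cast
  ring_nf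

lemma fourier_Pker (ht : 0 < t) :
    𝓕 (fun u => (Pker t u : ℂ)) = fun v : ℝ => Complex.exp (-(2 * Real.pi * t * |v|)) := by
  rw [← fourierInv_exp_neg_two_pi_mul_abs ht]
  refine Continuous.fourier_fourierInv_eq (by fun_prop) (integrable_exp_neg_two_pi_mul_abs ht) ?_
  refine (integrable_ofReal_Pker ht).comp_neg.congr (.of_forall fun u => ?_)
  beta_reduce
  rw [← congrFun (fourierInv_exp_neg_two_pi_mul_abs ht) (-u), Real.fourierInv_eq_fourier_neg,
    neg_neg]

lemma continuous_convolution_Pker {s : ℝ} (hs : 0 < s) (ht : 0 < t) :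
    Continuous ((fun u => (Pker s u : ℂ)) ⋆[ContinuousLinearMap.mul ℂ ℂ] fun u => (Pker t u : ℂ)) :=
  BddAbove.continuous_convolution_right_of_integrable _
    ⟨(Real.pi * t)⁻¹, Set.forall_mem_range.2 fun u => by
      rw [Complex.norm_real]
      exact norm_Pker_le ht u⟩
    (integrable_ofReal_Pker hs) (Complex.continuous_ofReal.comp (continuous_Pker ht))

theorem Pker_convolution_Pker {s : ℝ} (hs : 0 < s) (ht : 0 < t) :
    Pker s ⋆ Pker t = Pker (s + t) := by
  have hst : 0 < s + t := add_pos hs ht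
  set φ := (fun u => (Pker s u : ℂ)) ⋆[ContinuousLinearMap.mul ℂ ℂ] fun u => (Pker t u : ℂ)
  have hφ_int : Integrable φ :=
    (integrable_ofReal_Pker hs).integrable_convolution _ (integrable_ofReal_Pker ht)
  have hφ_fourier : 𝓕 φ = fun v : ℝ => Complex.exp (-(2 * Real.pi * ↑(s + t) * |v|)) := by
    funext v
    simp only [φ]
    rw [Real.fourier_mul_convolution_eq (integrable_ofReal_Pker hs) (integrable_ofReal_Pker ht),
      fourier_Pker hs, fourier_Pker ht, ← Complex.exp_add]
    push_cast
    ring_nf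
  have hφ : φ = fun v => (Pker (s + t) v : ℂ) := by
    rw [← fourierInv_exp_neg_two_pi_mul_abs hst, ← hφ_fourier]
    exact ((continuous_convolution_Pker hs ht).fourierInv_fourier_eq hφ_int
      (hφ_fourier ▸ integrable_exp_neg_two_pi_mul_abs hst)).symm
  funext v
  refine Complex.ofReal_injective ((integral_ofReal.symm.trans ?_).trans (congrFun hφ v))
  simp only [φ, convolution_mul, ← Complex.ofReal_mul]
  rfl

theorem Pker_convolution_Qker {s : ℝ} (hs : 0 < s) (ht : 0 < t) :
    Pker s ⋆ Qker t = Qker (s + t) := by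
  funext v
  have hcomp {φ : ℝ → ℝ} (hφ : Continuous φ) :
      AEStronglyMeasurable (fun u => Pker s u * φ (v - u)) volume :=
    ((continuous_Pker hs).mul (hφ.comp (continuous_sub_left v))).aestronglyMeasurable
  have hderiv := (hasDerivAt_integral_of_dominated_loc_of_deriv_le (μ := volume)
    (F := fun r u => Pker s u * Pker r (v - u)) (F' := fun r u => Pker s u * Qker r (v - u))
    (bound := fun u => Pker s u * (Real.pi * (t / 2) ^ 2)⁻¹) (lt_mem_nhds (half_lt_self ht))
    ?_ ?_ (hcomp (continuous_Qker ht)) ?_ ((integrable_Pker hs).mul_const _) ?_).2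
  · have hsemigroup : (fun r => (Pker s ⋆ Pker r) v) =ᶠ[𝓝 t] fun r => Pker (s + r) v := by
      filter_upwards [lt_mem_nhds ht] with r hr using congrFun (Pker_convolution_Pker hs hr) v
    exact (hderiv.congr_of_eventuallyEq hsemigroup.symm).unique
      ((hasDerivAt_Pker (add_pos hs ht) v).comp_const_add s t)
  · filter_upwards [lt_mem_nhds ht] with r hr using hcomp (continuous_Pker hr)
  · exact (integrable_Pker hs).mul_bdd (c := (Real.pi * t)⁻¹)
      ((continuous_Pker ht).comp (continuous_sub_left v)).aestronglyMeasurable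
      (.of_forall fun u => norm_Pker_le ht (v - u))
  · refine .of_forall fun u r (hr : t / 2 < r) => ?_
    rw [norm_mul, Real.norm_of_nonneg (Pker_nonneg hs u)]
    refine mul_le_mul_of_nonneg_left ((norm_Qker_le ((half_pos ht).trans hr) (v - u)).trans ?_)
      (Pker_nonneg hs u)
    gcongr
  · exact .of_forall fun u r (hr : t / 2 < r) =>
      (hasDerivAt_Pker ((half_pos ht).trans hr) (v - u)).const_mul (Pker s u)

/-- The absolute moment of order `α` of the Poisson kernel at time `1`, i.e. `E|U|^α` for a standard
Cauchy variable `U`; it is finite for `0 ≤ α < 1`. -/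
noncomputable def poissonMoment (α : ℝ) : ℝ := ∫ u, Pker 1 u * |u| ^ α

lemma Pker_one_le (u : ℝ) : Pker 1 u ≤ 2 / Real.pi * (1 + |u|) ^ (-2 : ℝ) := by
  have hu : 0 < 1 + |u| := by positivity
  rw [Real.rpow_neg hu.le, Real.rpow_two, Pker, one_pow, ← div_eq_mul_inv, div_div]
  rw [div_le_div_iff₀ (by positivity) (by positivity)]
  nlinarith [Real.pi_pos, sq_abs u, mul_nonneg Real.pi_pos.le (sq_nonneg (1 - |u|))]

lemma integrable_Pker_one_mul_abs_rpow {α : ℝ} (hα₀ : 0 ≤ α) (hα₁ : α < 1) :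
    Integrable fun u => Pker 1 u * |u| ^ α := by
  refine ((integrable_one_add_norm (E := ℝ) (μ := volume) (r := 2 - α)
    (by rw [Module.finrank_self]; norm_num; linarith)).const_mul (2 / Real.pi)).mono'
    ((continuous_Pker one_pos).mul
      (continuous_abs.rpow_const fun _ => .inr hα₀)).aestronglyMeasurable (.of_forall fun u => ?_)
  have hu : 0 < 1 + |u| := by positivity
  rw [Real.norm_of_nonneg (mul_nonneg (Pker_nonneg one_pos u) (by positivity)), Real.norm_eq_abs]
  calc Pker 1 u * |u| ^ α ≤ 2 / Real.pi * (1 + |u|) ^ (-2 : ℝ) * (1 + |u|) ^ α := by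
        gcongr
        · exact Pker_one_le u
        · exact le_add_of_nonneg_left zero_le_one
    _ = 2 / Real.pi * (1 + |u|) ^ (-(2 - α)) := by
        rw [mul_assoc, ← Real.rpow_add hu]
        ring_nf

lemma poissonMoment_pos {α : ℝ} (hα₀ : 0 ≤ α) (hα₁ : α < 1) : 0 < poissonMoment α :=
  integral_pos_of_integrable_nonneg_nonzero (x := 1)
    ((continuous_Pker one_pos).mul (continuous_abs.rpow_const fun _ => .inr hα₀))
    (integrable_Pker_one_mul_abs_rpow hα₀ hα₁)
    (fun u => mul_nonneg (Pker_nonneg one_pos u) (by positivity))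
    (by simp [Pker, Real.pi_ne_zero])

lemma Pker_mul_abs_rpow (ht : 0 < t) (α u : ℝ) :
    Pker t u * |u| ^ α = t ^ α * (t⁻¹ * (Pker 1 (u / t) * |u / t| ^ α)) := by
  have hPker : Pker t u = t⁻¹ * Pker 1 (u / t) := by
    unfold Pker
    field_simp
  have habs : |u| ^ α = t ^ α * |u / t| ^ α := by
    rw [← Real.mul_rpow ht.le (abs_nonneg _), abs_div, abs_of_pos ht, mul_div_cancel₀ _ ht.ne']
  rw [hPker, habs]
  ring

lemma integrable_Pker_mul_abs_rpow (ht : 0 < t) {α : ℝ} (hα₀ : 0 ≤ α) (hα₁ : α < 1) :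
    Integrable fun u => Pker t u * |u| ^ α := by
  simp only [Pker_mul_abs_rpow ht]
  exact (((integrable_Pker_one_mul_abs_rpow hα₀ hα₁).comp_div ht.ne').const_mul _).const_mul _

lemma integral_Pker_mul_abs_rpow (ht : 0 < t) (α : ℝ) :
    ∫ u, Pker t u * |u| ^ α = t ^ α * poissonMoment α := by
  simp only [Pker_mul_abs_rpow ht]
  rw [integral_const_mul, integral_const_mul,
    Measure.integral_comp_div (fun u => Pker 1 u * |u| ^ α), abs_of_pos ht, smul_eq_mul,
    inv_mul_cancel_left₀ ht.ne', poissonMoment]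

end PoissonKernel

section Translations

/-- Right translation by the horizontal element `a^r = (r, 0, 0)`: `h ↦ h·a^r`. -/
def amul (r : ℝ) (h : HR) : HR := (h.1 + r, h.2.1, h.2.2)

/-- Right translation by the horizontal element `b^s = (0, s, 0)`: `h ↦ h·b^s`. -/
def bmul (s : ℝ) (h : HR) : HR := (h.1, h.2.1 + s, h.2.2 + h.1 * s)

lemma amul_bmul_vmul (r s : ℝ) (h : HR) : amul r (bmul s (vmul (r * s) h)) = bmul s (amul r h) := by
  simp only [amul, bmul, vmul, Prod.mk.injEq, true_and]
  ring

lemma amul_vmul (r u : ℝ) (h : HR) : amul r (vmul u h) = vmul u (amul r h) := rfl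

lemma bmul_vmul (s u : ℝ) (h : HR) : bmul s (vmul u h) = vmul u (bmul s h) := by
  simp only [bmul, vmul, add_right_comm]

lemma amul_zero : amul 0 = id := by
  funext h
  simp [amul]

lemma bmul_zero : bmul 0 = id := by
  funext h
  simp [bmul]

lemma continuous_uncurry_vmul : Continuous (uncurry vmul) := by
  unfold uncurry vmul
  fun_prop

lemma continuous_uncurry_amul : Continuous (uncurry amul) := by
  unfold uncurry amul
  fun_prop

lemma continuous_uncurry_bmul : Continuous (uncurry bmul) := by
  unfold uncurry bmul
  fun_prop

lemma measurePreserving_vmul (u : ℝ) : MeasurePreserving (vmul u) :=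
  (MeasurePreserving.id volume).prod
    ((MeasurePreserving.id volume).prod (measurePreserving_add_right volume u))

lemma measurePreserving_amul (r : ℝ) : MeasurePreserving (amul r) :=
  (measurePreserving_add_right volume r).prod (MeasurePreserving.id volume)

lemma measurePreserving_bmul (s : ℝ) : MeasurePreserving (bmul s) :=
  (MeasurePreserving.id volume).skew_product
    (g := fun x (k : ℝ × ℝ) => (k.1 + s, k.2 + x * s)) (by fun_prop)
    (.of_forall fun x => ((measurePreserving_add_right volume s).prod
      (measurePreserving_add_right volume (x * s))).map_eq)

lemma eLpNorm_comp_vmul_sub_le {X : Type*} [NormedAddCommGroup X]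
    {p : ℝ≥0∞} (hp : 1 ≤ p) {F : HR → X}
    (hF : AEStronglyMeasurable F volume) {L M : ℝ≥0∞}
    (ha : ∀ r, eLpNorm (F ∘ amul r - F) p volume ≤ ‖r‖ₑ * L)
    (hb : ∀ s, eLpNorm (F ∘ bmul s - F) p volume ≤ ‖s‖ₑ * M) (u : ℝ) :
    eLpNorm (F ∘ vmul u - F) p volume ≤ ENNReal.ofReal (|u| ^ (1 / 2 : ℝ)) * (2 * (L + M)) := by
  obtain ⟨s, hs, hsu⟩ : ∃ s : ℝ, |s| = √|u| ∧ √|u| * s = u := by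
    rcases le_total 0 u with hu | hu
    · exact ⟨√|u|, abs_of_nonneg (Real.sqrt_nonneg _), by
        rw [Real.mul_self_sqrt (abs_nonneg u), abs_of_nonneg hu]⟩
    · exact ⟨-√|u|, by rw [abs_neg, abs_of_nonneg (Real.sqrt_nonneg _)], by
        rw [mul_neg, Real.mul_self_sqrt (abs_nonneg u), abs_of_nonpos hu, neg_neg]⟩
  calc eLpNorm (F ∘ vmul u - F) p volume
      ≤ 2 * (eLpNorm (F ∘ amul √|u| - F) p volume + eLpNorm (F ∘ bmul s - F) p volume) :=
        eLpNorm_comp_sub_le_of_commutator (measurePreserving_amul _) (measurePreserving_bmul s)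
          (measurePreserving_vmul u) (fun h => by rw [← amul_bmul_vmul, hsu]) hF hp
    _ ≤ 2 * (‖√|u|‖ₑ * L + ‖s‖ₑ * M) := by
        gcongr
        exacts [ha _, hb s]
    _ = ENNReal.ofReal (|u| ^ (1 / 2 : ℝ)) * (2 * (L + M)) := by
        rw [Real.enorm_eq_ofReal_abs, Real.enorm_eq_ofReal_abs, hs, abs_of_nonneg (by positivity),
          ← Real.sqrt_eq_rpow]
        ring

variable {X : Type*} [NormedAddCommGroup X] [NormedSpace ℝ X]

lemma hasDerivAt_comp_amul {f : HR → X} (hf : Differentiable ℝ f) (h : HR) (σ : ℝ) :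
    HasDerivAt (fun σ => f (amul σ h)) (da f (amul σ h)) σ :=
  (hf _).hasFDerivAt.comp_hasDerivAt σ
    (((hasDerivAt_id' σ).const_add h.1).prodMk (hasDerivAt_const σ h.2))

lemma hasDerivAt_comp_bmul {f : HR → X} (hf : Differentiable ℝ f) (h : HR) (σ : ℝ) :
    HasDerivAt (fun σ => f (bmul σ h)) (db f (bmul σ h)) σ := by
  have hbmul : HasDerivAt (fun σ => bmul σ h) ((0, 1, 0) + h.1 • (0, 0, 1)) σ :=
    ((hasDerivAt_const σ h.1).prodMk (((hasDerivAt_id' σ).const_add h.2.1).prodMk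
      (((hasDerivAt_id' σ).const_mul h.1).const_add h.2.2))).congr_deriv (by simp)
  refine ((hf _).hasFDerivAt.comp_hasDerivAt σ hbmul).congr_deriv ?_
  rw [map_add, map_smul]
  rfl

end Translations

section CentralConvolution

lemma continuous_comp_vmul_neg {X : Type*} [TopologicalSpace X] {g : HR → X} (hg : Continuous g)
    (h : HR) : Continuous fun u => g (vmul (-u) h) := by
  unfold vmul
  fun_prop

variable {X : Type*} [NormedAddCommGroup X] [NormedSpace ℝ X] {ψ : ℝ → ℝ} {g : HR → X} {C : ℝ}

lemma integrable_smul_comp_vmul_neg (hψ : Integrable ψ) (hg : Continuous g) (hC : ∀ h, ‖g h‖ ≤ C)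
    (h : HR) : Integrable fun u => ψ u • g (vmul (-u) h) :=
  hψ.smul_bdd C (continuous_comp_vmul_neg hg h).aestronglyMeasurable (.of_forall fun _ => hC _)

lemma norm_smul_le_mul_of_norm_le (hC : ∀ h, ‖g h‖ ≤ C) (c : ℝ) (h : HR) :
    ‖c • g h‖ ≤ ‖c‖ * C := by
  rw [norm_smul]
  exact mul_le_mul_of_nonneg_left (hC h) (norm_nonneg c)

lemma norm_conv_le (hψ : Integrable ψ) (hC : ∀ h, ‖g h‖ ≤ C) (h : HR) :
    ‖conv ψ g h‖ ≤ ∫ u, ‖ψ u‖ * C :=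
  norm_integral_le_of_norm_le (hψ.norm.mul_const C)
    (.of_forall fun _ => norm_smul_le_mul_of_norm_le hC _ _)

lemma continuous_conv (hψ : Integrable ψ) (hg : Continuous g) (hC : ∀ h, ‖g h‖ ≤ C) :
    Continuous (conv ψ g) :=
  continuous_of_dominated
    (fun h => (integrable_smul_comp_vmul_neg hψ hg hC h).aestronglyMeasurable)
    (fun _ => .of_forall fun _ => norm_smul_le_mul_of_norm_le hC _ _) (hψ.norm.mul_const C)
    (.of_forall fun _ => by fun_prop)

lemma eLpNorm_conv_le {p : ℝ≥0∞} (hp : 1 ≤ p) (hp_top : p ≠ ∞) (hψ : StronglyMeasurable ψ)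
    (hg : Continuous g) :
    eLpNorm (conv ψ g) p volume ≤ (∫⁻ u, ‖ψ u‖ₑ) * eLpNorm g p volume := by
  have hmeas : StronglyMeasurable (uncurry fun u h => ψ u • g (vmul (-u) h)) :=
    (hψ.comp_measurable measurable_fst).smul
      (hg.comp (continuous_uncurry_vmul.comp
        (continuous_fst.neg.prodMk continuous_snd))).stronglyMeasurable
  calc eLpNorm (conv ψ g) p volume
      ≤ ∫⁻ u, eLpNorm (ψ u • g ∘ vmul (-u)) p volume := eLpNorm_integral_le hp hp_top hmeas
    _ = (∫⁻ u, ‖ψ u‖ₑ) * eLpNorm g p volume := by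
        simp only [eLpNorm_const_smul,
          eLpNorm_comp_measurePreserving hg.aestronglyMeasurable (measurePreserving_vmul _)]
        exact lintegral_mul_const _ hψ.enorm

lemma memLp_conv {p : ℝ≥0∞} (hp : 1 ≤ p) (hp_top : p ≠ ∞) (hψ : Integrable ψ)
    (hψ_meas : StronglyMeasurable ψ) (hg : Continuous g) (hC : ∀ h, ‖g h‖ ≤ C)
    (hg_Lp : MemLp g p volume) : MemLp (conv ψ g) p volume :=
  ⟨(continuous_conv hψ hg hC).aestronglyMeasurable,
    (eLpNorm_conv_le hp hp_top hψ_meas hg).trans_lt (ENNReal.mul_lt_top hψ.2 hg_Lp.2)⟩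

lemma conv_conv [CompleteSpace X] {φ : ℝ → ℝ} (hφ : Integrable φ) (hψ : Integrable ψ)
    (hg : Continuous g) (hC : ∀ h, ‖g h‖ ≤ C) :
    conv φ (conv ψ g) = conv (φ ⋆ ψ) g := by
  funext h
  set k : ℝ → X := fun z => g (h.1, h.2.1, z)
  have hk : Continuous k := by fun_prop
  have hψk : Continuous ((fun u => ‖ψ u‖) ⋆[ContinuousLinearMap.mul ℝ ℝ] fun u => ‖k u‖) :=
    BddAbove.continuous_convolution_right_of_integrable _
      ⟨C, Set.forall_mem_range.2 fun u => by rw [norm_norm]; exact hC _⟩ hψ.norm hk.norm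
  refine (convolution_assoc (ContinuousLinearMap.lsmul ℝ ℝ) (ContinuousLinearMap.lsmul ℝ ℝ)
    (ContinuousLinearMap.lsmul ℝ ℝ) (ContinuousLinearMap.lsmul ℝ ℝ) (fun a b c => mul_smul a b c)
    hφ.1 hψ.1 hk.aestronglyMeasurable (hφ.ae_convolution_exists _ hψ) (.of_forall fun z => ?_)
    ?_).symm
  · exact hψ.norm.mul_bdd (c := C) (hk.norm.comp (continuous_sub_left z)).aestronglyMeasurable
      (.of_forall fun u => by rw [norm_norm]; exact hC _)
  · refine hφ.norm.mul_bdd (c := ∫ u, ‖ψ u‖ * C)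
      (hψk.comp (continuous_sub_left _)).aestronglyMeasurable (.of_forall fun u => ?_)
    refine norm_integral_le_of_norm_le (hψ.norm.mul_const C) (.of_forall fun v => ?_)
    rw [ContinuousLinearMap.mul_apply', norm_mul, norm_norm, norm_norm]
    exact mul_le_mul_of_nonneg_left (hC _) (norm_nonneg _)

lemma hasDerivAt_conv_comp (hψ : Integrable ψ) {T : ℝ → HR → HR}
    (hT : ∀ σ u h, T σ (vmul u h) = vmul u (T σ h)) {f f' : HR → X} (hf : Continuous f)
    {C' : ℝ} (hC : ∀ h, ‖f h‖ ≤ C) (hf' : Continuous f') (hC' : ∀ h, ‖f' h‖ ≤ C')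
    (hderiv : ∀ h σ, HasDerivAt (fun σ => f (T σ h)) (f' (T σ h)) σ) (h : HR) (σ : ℝ) :
    HasDerivAt (fun σ => conv ψ f (T σ h)) (conv ψ f' (T σ h)) σ :=
  (hasDerivAt_integral_of_dominated_loc_of_deriv_le (μ := volume)
    (F := fun σ u => ψ u • f (vmul (-u) (T σ h))) (F' := fun σ u => ψ u • f' (vmul (-u) (T σ h)))
    univ_mem
    (.of_forall fun _ => (integrable_smul_comp_vmul_neg hψ hf hC _).aestronglyMeasurable)
    (integrable_smul_comp_vmul_neg hψ hf hC _)
    (integrable_smul_comp_vmul_neg hψ hf' hC' _).aestronglyMeasurable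
    (.of_forall fun _ _ _ => norm_smul_le_mul_of_norm_le hC' _ _) (hψ.norm.mul_const C')
    (.of_forall fun u τ _ => by
      have hterm := (hderiv (vmul (-u) h) τ).const_smul (ψ u)
      simp only [hT] at hterm
      exact hterm)).2

end CentralConvolution

section HorizontalEstimate

variable {X : Type*} [NormedAddCommGroup X] [NormedSpace ℝ X] {p : ℝ≥0∞} {t : ℝ}

lemma eLpNorm_conv_Pker_sub_le [CompleteSpace X] (hp : 1 ≤ p) (hp_top : p ≠ ∞) (ht : 0 < t)
    {F : HR → X} (hF : Continuous F) {C : ℝ} (hC : ∀ h, ‖F h‖ ≤ C) {α : ℝ} (hα₀ : 0 ≤ α)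
    (hα₁ : α < 1) {K : ℝ≥0∞}
    (hK : ∀ u, eLpNorm (F ∘ vmul u - F) p volume ≤ ENNReal.ofReal (|u| ^ α) * K) :
    eLpNorm (conv (Pker t) F - F) p volume ≤ ENNReal.ofReal (t ^ α * poissonMoment α) * K := by
  have hP := integrable_Pker ht
  have hint := integrable_Pker_mul_abs_rpow ht hα₀ hα₁
  have hsub : conv (Pker t) F - F = fun h => ∫ u, Pker t u • (F ∘ vmul (-u) - F) h := by
    funext h
    have hconst : ∫ u, Pker t u • F h = F h := by
      rw [integral_smul_const, integral_Pker ht, one_smul]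
    simp only [Pi.sub_apply, comp_apply, smul_sub]
    rw [integral_sub (integrable_smul_comp_vmul_neg hP hF hC h) (hP.smul_const (F h)), hconst]
    rfl
  have hmeas : StronglyMeasurable (uncurry fun u => Pker t u • (F ∘ vmul (-u) - F)) :=
    (((continuous_Pker ht).comp continuous_fst).smul
      ((hF.comp (continuous_uncurry_vmul.comp (continuous_fst.neg.prodMk continuous_snd))).sub
        (hF.comp continuous_snd))).stronglyMeasurable
  calc eLpNorm (conv (Pker t) F - F) p volume
      ≤ ∫⁻ u, eLpNorm (Pker t u • (F ∘ vmul (-u) - F)) p volume := by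
        rw [hsub]
        exact eLpNorm_integral_le hp hp_top hmeas
    _ ≤ ∫⁻ u, ENNReal.ofReal (Pker t u * |u| ^ α) * K := by
        gcongr with u
        rw [eLpNorm_const_smul, Real.enorm_of_nonneg (Pker_nonneg ht u),
          ENNReal.ofReal_mul (Pker_nonneg ht u), mul_assoc]
        gcongr
        simpa only [abs_neg] using hK (-u)
    _ = ENNReal.ofReal (t ^ α * poissonMoment α) * K := by
        rw [lintegral_mul_const'' _ hint.1.aemeasurable.ennreal_ofReal,
          ← integral_Pker_mul_abs_rpow ht, ofReal_integral_eq_lintegral_ofReal hint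
            (.of_forall fun u => mul_nonneg (Pker_nonneg ht u) (by positivity))]

lemma conv_Qker_two_mul [CompleteSpace X] (ht : 0 < t) {g : HR → X} (hg : Continuous g) {C : ℝ}
    (hC : ∀ h, ‖g h‖ ≤ C) : conv (Qker (2 * t)) g = conv (Pker t) (conv (Qker t) g) := by
  rw [conv_conv (integrable_Pker ht) (integrable_Qker ht) hg hC, Pker_convolution_Qker ht ht,
    two_mul]

theorem eLpNorm_conv_Qker_sub_le [CompleteSpace X] (hp : 1 ≤ p) (hp_top : p ≠ ∞) (ht : 0 < t)
    {f : HR → X} (hf : Differentiable ℝ f) (ha : Continuous (da f)) (hb : Continuous (db f))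
    {C A B : ℝ} (hC : ∀ h, ‖f h‖ ≤ C) (hA : ∀ h, ‖da f h‖ ≤ A) (hB : ∀ h, ‖db f h‖ ≤ B) :
    eLpNorm (conv (Qker t) f - conv (Qker (2 * t)) f) p volume ≤
      ENNReal.ofReal (t ^ (1 / 2 : ℝ) * poissonMoment (1 / 2)) *
        (2 * (eLpNorm (conv (Qker t) (da f)) p volume
          + eLpNorm (conv (Qker t) (db f)) p volume)) := by
  have hQ := integrable_Qker ht
  have hF := continuous_conv hQ hf.continuous hC
  rw [conv_Qker_two_mul ht hf.continuous hC, eLpNorm_sub_comm]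
  refine eLpNorm_conv_Pker_sub_le hp hp_top ht hF (norm_conv_le hQ hC) (by norm_num) (by norm_num)
    (eLpNorm_comp_vmul_sub_le hp hF.aestronglyMeasurable (fun r => ?_) fun s => ?_)
  · exact eLpNorm_comp_flow_sub_le hp hp_top continuous_uncurry_amul amul_zero
      measurePreserving_amul (continuous_conv hQ ha hA)
      (hasDerivAt_conv_comp hQ amul_vmul hf.continuous hC ha hA (hasDerivAt_comp_amul hf)) r
  · exact eLpNorm_comp_flow_sub_le hp hp_top continuous_uncurry_bmul bmul_zero
      measurePreserving_bmul (continuous_conv hQ hb hB)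
      (hasDerivAt_conv_comp hQ bmul_vmul hf.continuous hC hb hB (hasDerivAt_comp_bmul hf)) s

end HorizontalEstimate

section RealExponent

variable {H X : Type*} [MeasurableSpace H] {μ : Measure H} [NormedAddCommGroup X] {p : ℝ}

lemma integral_norm_rpow_eq_lpNorm (hp : 0 < p) {g : H → X} (hg : AEStronglyMeasurable g μ) :
    (∫ h, ‖g h‖ ^ p ∂μ) ^ (1 / p) = lpNorm g (ENNReal.ofReal p) μ := by
  rw [lpNorm_eq_integral_norm_rpow_toReal (by simpa using hp) ENNReal.ofReal_ne_top hg,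
    ENNReal.toReal_ofReal hp.le, one_div]

lemma lpNorm_add_lpNorm_le (hp : 0 < p) {g₁ g₂ : H → X} (hg₁ : MemLp g₁ (ENNReal.ofReal p) μ)
    (hg₂ : MemLp g₂ (ENNReal.ofReal p) μ) :
    lpNorm g₁ (ENNReal.ofReal p) μ + lpNorm g₂ (ENNReal.ofReal p) μ ≤
      2 * (∫ h, (‖g₁ h‖ ^ p + ‖g₂ h‖ ^ p) ∂μ) ^ (1 / p) := by
  have hint {g : H → X} (hg : MemLp g (ENNReal.ofReal p) μ) :
      Integrable (fun h => ‖g h‖ ^ p) μ := by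
    simpa only [ENNReal.toReal_ofReal hp.le] using
      hg.integrable_norm_rpow (by simpa using hp) ENNReal.ofReal_ne_top
  rw [← integral_norm_rpow_eq_lpNorm hp hg₁.1, ← integral_norm_rpow_eq_lpNorm hp hg₂.1, two_mul]
  have hsum := (hint hg₁).add (hint hg₂)
  gcongr
  · exact hint hg₁
  · exact le_add_of_nonneg_right fun _ => Real.rpow_nonneg (norm_nonneg _) p
  · exact hint hg₂
  · exact le_add_of_nonneg_left fun _ => Real.rpow_nonneg (norm_nonneg _) p

end RealExponent

section HorizontalGradient

variable {X : Type*} [NormedAddCommGroup X] [NormedSpace ℝ X] {f : HR → X}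

lemma continuous_da (hf : ContDiff ℝ 1 f) : Continuous (da f) :=
  (hf.continuous_fderiv one_ne_zero).clm_apply continuous_const

lemma continuous_db (hf : ContDiff ℝ 1 f) : Continuous (db f) := by
  have hfderiv (v : HR) : Continuous fun h => fderiv ℝ f h v :=
    (hf.continuous_fderiv one_ne_zero).clm_apply continuous_const
  exact (hfderiv _).add (continuous_fst.smul (hfderiv _))

lemma hasCompactSupport_da (hf : HasCompactSupport f) : HasCompactSupport (da f) :=
  (hf.fderiv ℝ).comp_left (g := fun L : HR →L[ℝ] X => L (1, 0, 0)) (zero_apply _)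

lemma hasCompactSupport_db (hf : HasCompactSupport f) : HasCompactSupport (db f) :=
  (hf.fderiv ℝ).mono fun h hh hzero => hh (by simp [db, hzero])

end HorizontalGradient

end HR

open HR in
theorem increment_lemma_general {X : Type*} [NormedAddCommGroup X] [NormedSpace ℝ X]
    [CompleteSpace X] {p t : ℝ} (hp : 1 ≤ p) (ht : 0 < t) {f : HR → X} (hf : ContDiff ℝ 1 f)
    (hf_bdd : ∃ C, ∀ h, ‖f h‖ ≤ C) (ha_bdd : ∃ A, ∀ h, ‖da f h‖ ≤ A)
    (hb_bdd : ∃ B, ∀ h, ‖db f h‖ ≤ B) (ha_Lp : MemLp (da f) (ENNReal.ofReal p) volume)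
    (hb_Lp : MemLp (db f) (ENNReal.ofReal p) volume) :
    (∫ h : HR, ‖conv (Qker t) f h - conv (Qker (2 * t)) f h‖ ^ p) ^ (1 / p) ≤
      4 * poissonMoment (1 / 2) * √t *
        (∫ h : HR, (‖conv (Qker t) (da f) h‖ ^ p + ‖conv (Qker t) (db f) h‖ ^ p)) ^ (1 / p) := by
  obtain ⟨⟨C, hC⟩, ⟨A, hA⟩, ⟨B, hB⟩⟩ := And.intro hf_bdd (And.intro ha_bdd hb_bdd)
  have hp₀ : 0 < p := zero_lt_one.trans_le hp
  have hp' : 1 ≤ ENNReal.ofReal p := by simpa using hp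
  have hm : 0 < poissonMoment (1 / 2) := poissonMoment_pos (by norm_num) (by norm_num)
  have hQ := integrable_Qker ht
  have hQ_meas := (continuous_Qker ht).stronglyMeasurable
  have ha := continuous_da hf
  have hb := continuous_db hf
  have hQa := memLp_conv hp' ENNReal.ofReal_ne_top hQ hQ_meas ha hA ha_Lp
  have hQb := memLp_conv hp' ENNReal.ofReal_ne_top hQ hQ_meas hb hB hb_Lp
  have hdiff : AEStronglyMeasurable (conv (Qker t) f - conv (Qker (2 * t)) f) volume :=
    ((continuous_conv hQ hf.continuous hC).sub
      (continuous_conv (integrable_Qker (by positivity)) hf.continuous hC)).aestronglyMeasurable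
  calc (∫ h : HR, ‖conv (Qker t) f h - conv (Qker (2 * t)) f h‖ ^ p) ^ (1 / p)
      = lpNorm (conv (Qker t) f - conv (Qker (2 * t)) f) (ENNReal.ofReal p) volume :=
        integral_norm_rpow_eq_lpNorm hp₀ hdiff
    _ ≤ √t * poissonMoment (1 / 2) * (2 * (lpNorm (conv (Qker t) (da f)) (ENNReal.ofReal p) volume
          + lpNorm (conv (Qker t) (db f)) (ENNReal.ofReal p) volume)) := by
        have hle := ENNReal.toReal_mono (by finiteness [hQa.2.ne, hQb.2.ne])
          (eLpNorm_conv_Qker_sub_le hp' ENNReal.ofReal_ne_top ht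
            (hf.differentiable one_ne_zero) ha hb hC hA hB)
        rwa [toReal_eLpNorm hdiff, ENNReal.toReal_mul, ENNReal.toReal_mul,
          ENNReal.toReal_ofReal (by positivity), ENNReal.toReal_ofNat,
          ENNReal.toReal_add hQa.2.ne hQb.2.ne, toReal_eLpNorm hQa.1, toReal_eLpNorm hQb.1,
          ← Real.sqrt_eq_rpow] at hle
    _ ≤ √t * poissonMoment (1 / 2) * (2 * (2 * (∫ h : HR,
          (‖conv (Qker t) (da f) h‖ ^ p + ‖conv (Qker t) (db f) h‖ ^ p)) ^ (1 / p))) := by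
        gcongr
        exact lpNorm_add_lpNorm_le hp₀ hQa hQb
    _ = _ := by ring

open HR in
/-- Lemma 2.4: `‖Q_t*f − Q_{2t}*f‖_{L_p} ≲ √t ‖Q_t*∇_ℍ f‖_{L_p(ℓ_p²)}`. -/
theorem increment_lemma :
    ∃ C : ℝ, 0 < C ∧
      ∀ p : ℝ, 1 ≤ p → ∀ t : ℝ, 0 < t →
        ∀ (X : Type) [NormedAddCommGroup X] [NormedSpace ℝ X] [CompleteSpace X],
          ∀ f : HR → X, ContDiff ℝ (⊤ : ℕ∞) f → HasCompactSupport f →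
            (∫ h : HR, ‖conv (Qker t) f h - conv (Qker (2 * t)) f h‖ ^ p) ^ (1 / p) ≤
              C * Real.sqrt t *
                (∫ h : HR,
                  (‖conv (Qker t) (da f) h‖ ^ p + ‖conv (Qker t) (db f) h‖ ^ p)) ^ (1 / p) := by
  refine ⟨4 * poissonMoment (1 / 2),
    mul_pos four_pos (poissonMoment_pos (by norm_num) (by norm_num)), ?_⟩
  intro p hp t ht X _ _ _ f hf hf_supp
  have hf₁ : ContDiff ℝ 1 f := hf.of_le (by simp)
  have ha := continuous_da hf₁
  have hb := continuous_db hf₁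
  have ha_supp := hasCompactSupport_da hf_supp
  have hb_supp := hasCompactSupport_db hf_supp
  exact increment_lemma_general hp ht hf₁ (hf_supp.exists_bound_of_continuous hf.continuous)
    (ha_supp.exists_bound_of_continuous ha) (hb_supp.exists_bound_of_continuous hb)
    (ha.memLp_of_hasCompactSupport ha_supp) (hb.memLp_of_hasCompactSupport hb_supp)
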